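/- Let α ∈ Φ^l be (4,…,4)-regular and suppose ord_{ij}α = −2 for some 1 ≤ i < j ≤ l. Then ρ^{(−2)}_{ij}α, regarded as a rational function of the l−1 variables z₁,…,ẑ_i,…,z_l, is (4,…,4)-regular (with respect to these l−1 variables). -/

import Mathlib

open scoped Classical

noncomputable section

namespace Griess

open MvPolynomial

variable {k : Type} [Field k]

/-- The field `k(z₁,…,z_l)` of rational functions over `k` in `l` variables. -/
abbrev RF (k : Type) [Field k] (l : ℕ) : Type := FractionRing (MvPolynomial (Fin l) k)

/-- The variable `zᵢ` as an element of the rational function field. -/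
def zv {k : Type} [Field k] {l : ℕ} (i : Fin l) : RF k l :=
  algebraMap (MvPolynomial (Fin l) k) (RF k l) (MvPolynomial.X i)

/-- The space `Φ^l` of rational functions of the form
`p(z₁,…,z_l) · ∏_{i<j} (zᵢ - z_j)^{k_{ij}}`. -/
def Phi (k : Type) [Field k] (l : ℕ) : Set (RF k l) :=
  { x | ∃ (p : MvPolynomial (Fin l) k) (e : Fin l → Fin l → ℤ),
      x = algebraMap (MvPolynomial (Fin l) k) (RF k l) p *
        ∏ i : Fin l, ∏ j : Fin l, (if i < j then (zv i - zv j) ^ e i j else 1) }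

/-- `D` is the family of partial derivative operators `∂_{z₁},…,∂_{z_l}`:
a family of `k`-linear derivations with `D i (z j) = δ_{ij}`. -/
def IsPartialDeriv {l : ℕ} (D : Fin l → Derivation k (RF k l) (RF k l)) : Prop :=
  ∀ i j : Fin l, D i (zv j) = if j = i then 1 else 0

/-- The operator `Δ = Σᵢ ∂_{zᵢ}`. -/
def Delta {l : ℕ} (D : Fin l → Derivation k (RF k l) (RF k l)) (α : RF k l) : RF k l :=
  ∑ i, D i α

/-- The operator `Δ*(n₁,…,n_l) = Σᵢ (zᵢ² ∂_{zᵢ} + nᵢ zᵢ)`. -/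
def DeltaStar {l : ℕ} (D : Fin l → Derivation k (RF k l) (RF k l)) (n : Fin l → ℤ)
    (α : RF k l) : RF k l :=
  ∑ i, ((zv i) ^ 2 * D i α + (n i : RF k l) * zv i * α)

section Subst

variable {l : ℕ}

/-- The embedding of polynomials in `z₁,…,z_l` into rational functions of
`z₁,…,z_l` and one extra variable `t` (`= RatFunc.X`). -/
def toRatFuncHom (k : Type) [Field k] (l : ℕ) :
    Polynomial (MvPolynomial (Fin l) k) →+* RatFunc (RF k l) :=
  (algebraMap (Polynomial (RF k l)) (RatFunc (RF k l))).comp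
    (Polynomial.mapRingHom (algebraMap (MvPolynomial (Fin l) k) (RF k l)))

lemma toRatFuncHom_injective : Function.Injective (toRatFuncHom k l) := by
  have h1 : Function.Injective (algebraMap (Polynomial (RF k l)) (RatFunc (RF k l))) :=
    IsFractionRing.injective _ _
  have h2 : Function.Injective
      (Polynomial.mapRingHom (algebraMap (MvPolynomial (Fin l) k) (RF k l))) :=
    Polynomial.map_injective _ (IsFractionRing.injective _ _)
  exact fun a b hab => h2 (h1 hab)

/-- Polynomial level substitution `z_j ↦ t·z_j` for `j ∈ J`. -/
def scaleAux (k : Type) [Field k] (l : ℕ) (J : Finset (Fin l)) :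
    MvPolynomial (Fin l) k →+* Polynomial (MvPolynomial (Fin l) k) :=
  (MvPolynomial.aeval (R := k) fun i =>
    if i ∈ J then Polynomial.X * Polynomial.C (MvPolynomial.X i)
    else Polynomial.C (MvPolynomial.X i)).toRingHom

lemma scaleAux_injective (J : Finset (Fin l)) :
    Function.Injective (scaleAux k l J) := by
  have h : (Polynomial.evalRingHom (1 : MvPolynomial (Fin l) k)).comp (scaleAux k l J)
      = RingHom.id _ := by
    apply MvPolynomial.ringHom_ext
    · intro r; simp [scaleAux]
    · intro i; by_cases hi : i ∈ J <;> simp [scaleAux, hi]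
  intro p q hpq
  have hp := DFunLike.congr_fun h p
  have hq := DFunLike.congr_fun h q
  simp only [RingHom.comp_apply, RingHom.id_apply] at hp hq
  rw [← hp, ← hq, hpq]

/-- The substitution `z_j ↦ t·z_j` (for `j ∈ J`), as a map from rational functions
in `z₁,…,z_l` to rational functions in `z₁,…,z_l` and `t`.  Reading off the
coefficients of the Laurent expansion in `t` at `t = 0` of `scaleJ J α` yields the
decomposition of `α` into its homogeneous components with respect to the total degree
in the variables `{z_j : j ∈ J}`, i.e. the expansion of `α` in the domain where the
variables of `J` are much smaller than the remaining variables. -/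
def scaleJ (J : Finset (Fin l)) : RF k l →+* RatFunc (RF k l) :=
  IsFractionRing.lift (g := (toRatFuncHom k l).comp (scaleAux k l J))
    (fun a b hab => scaleAux_injective J (toRatFuncHom_injective hab))

/-- Polynomial level substitution `z_i ↦ z_j + t`. -/
def subPairAux (k : Type) [Field k] (l : ℕ) (i j : Fin l) :
    MvPolynomial (Fin l) k →+* Polynomial (MvPolynomial (Fin l) k) :=
  (MvPolynomial.aeval (R := k) fun s =>
    if s = i then Polynomial.X + Polynomial.C (MvPolynomial.X j)
    else Polynomial.C (MvPolynomial.X s)).toRingHom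

lemma subPairAux_injective (i j : Fin l) :
    Function.Injective (subPairAux k l i j) := by
  have h : (Polynomial.evalRingHom (MvPolynomial.X i - MvPolynomial.X j)).comp
      (subPairAux k l i j) = RingHom.id _ := by
    apply MvPolynomial.ringHom_ext
    · intro r; simp [subPairAux]
    · intro s; by_cases hs : s = i <;> simp [subPairAux, hs]
  intro p q hpq
  have hp := DFunLike.congr_fun h p
  have hq := DFunLike.congr_fun h q
  simp only [RingHom.comp_apply, RingHom.id_apply] at hp hq
  rw [← hp, ← hq, hpq]

/-- The substitution `z_i ↦ z_j + t`, as a map from rational functions in `z₁,…,z_l`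
to rational functions in the variables `z₁,…,z_l` and `t`.  Reading off the Laurent
coefficients in `t` at `t = 0` yields the expansion of a rational function in powers
of `z_i - z_j`, with coefficients not involving `z_i`. -/
def subPair (i j : Fin l) : RF k l →+* RatFunc (RF k l) :=
  IsFractionRing.lift (g := (toRatFuncHom k l).comp (subPairAux k l i j))
    (fun a b hab => subPairAux_injective i j (toRatFuncHom_injective hab))

end Subst

/-- The coefficient of `tᵐ` in the Laurent expansion at `t = 0` of a rational
function of `t`. -/
def lcoeff {L : Type} [Field L] (m : ℤ) (f : RatFunc L) : L :=
  (f : LaurentSeries L).coeff m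

/-- The component `(α)_n` of `α` of degree `n` with respect to the partition
`{1,…,l} = Jᶜ ⊔ J` and the weights `d`:  the part of the expansion of `α` in the
domain where the variables of `J` are much smaller than those of `Jᶜ` whose total
degree in the variables `{z_j : j ∈ J}` equals `n - Σ_{j∈J} d_j`. -/
def component {l : ℕ} (J : Finset (Fin l)) (d : Fin l → ℤ) (n : ℤ) (α : RF k l) :
    RF k l :=
  lcoeff (n - ∑ j ∈ J, d j) (scaleJ J α)

/-- `α` is homogeneous of total degree `d` in the variables `{z_i : i ∈ S}`:
substituting `z_i ↦ t·z_i` for `i ∈ S` multiplies `α` by `t^d`. -/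
def IsHomogeneousOn {l : ℕ} (S : Finset (Fin l)) (d : ℤ) (α : RF k l) : Prop :=
  scaleJ S α = RatFunc.X ^ d * RatFunc.C α

/-- `ρ^{(m)}_{ij} α`: the coefficient of `(z_i - z_j)^m` in the expansion of `α`
in powers of `z_i - z_j` (the coefficients do not involve `z_i`). -/
def rho {l : ℕ} (i j : Fin l) (m : ℤ) (α : RF k l) : RF k l :=
  lcoeff m (subPair i j α)

/-- `α` is a rational function of the variables `{z_i : i ∈ S}` only. -/
def dependsOnlyOn {l : ℕ} (S : Finset (Fin l)) (α : RF k l) : Prop :=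
  α ∈ Subfield.closure (Set.range (algebraMap k (RF k l)) ∪ {x | ∃ i ∈ S, x = zv i})

/-- `α` is an admissible function of the variables `{z_i : i ∈ S}` (the space
`R^{|S|}`):  `α ∈ Φ` is a rational function of the variables of `S` only, it is
`(4,…,4)`-regular and homogeneous of degree `-2|S|` in these variables, and all its
components of negative degree, as well as those of degree `1`, vanish (with respect
to every partition of `S` and all weights equal to `2`). -/
def Admissible {l : ℕ} (D : Fin l → Derivation k (RF k l) (RF k l)) (S : Finset (Fin l))
    (α : RF k l) : Prop :=
  α ∈ Phi k l ∧ dependsOnlyOn S α ∧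
    (∑ i ∈ S, ((zv i) ^ 2 * D i α + 4 * zv i * α)) = 0 ∧
    IsHomogeneousOn S (-(2 * (S.card : ℤ))) α ∧
    ∀ J ⊆ S, ∀ n : ℤ, (n < 0 ∨ n = 1) → component J (fun _ => 2) n α = 0

/-- `α` is an indecomposable admissible function of the variables `{z_i : i ∈ S}`
(the space `R₀^{|S|}`): admissible, and all the components `(α)₀` with respect to
partitions of `S` into two nonempty parts vanish. -/
def AdmissibleInd {l : ℕ} (D : Fin l → Derivation k (RF k l) (RF k l))
    (S : Finset (Fin l)) (α : RF k l) : Prop :=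
  Admissible D S α ∧
    ∀ J ⊆ S, J ≠ ∅ → J ≠ S → component J (fun _ => 2) 0 α = 0

section Shift

variable {l : ℕ}

/-- Polynomial level substitution `z_s ↦ z_s - z_t` for `s ∈ S`. -/
def shiftAuxP (k : Type) [Field k] (l : ℕ) (S : Finset (Fin l)) (t : Fin l) :
    MvPolynomial (Fin l) k →+* MvPolynomial (Fin l) k :=
  (MvPolynomial.aeval (R := k) fun s =>
    if s ∈ S then MvPolynomial.X s - MvPolynomial.X t else MvPolynomial.X s).toRingHom

lemma shiftAuxP_injective (S : Finset (Fin l)) (t : Fin l) (ht : t ∉ S) :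
    Function.Injective (shiftAuxP k l S t) := by
  have h : ((MvPolynomial.aeval (R := k) fun s =>
      if s ∈ S then MvPolynomial.X s + MvPolynomial.X t
      else MvPolynomial.X s).toRingHom).comp (shiftAuxP k l S t) = RingHom.id _ := by
    apply MvPolynomial.ringHom_ext
    · intro r; simp [shiftAuxP]
    · intro s
      by_cases hs : s ∈ S
      · have hst : s ≠ t := fun hst => ht (hst ▸ hs)
        simp [shiftAuxP, hs, ht]
      · simp [shiftAuxP, hs]
  intro p q hpq
  have hp := DFunLike.congr_fun h p
  have hq := DFunLike.congr_fun h q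
  simp only [RingHom.comp_apply, RingHom.id_apply] at hp hq
  rw [← hp, ← hq, hpq]

/-- The shift operator substituting `z_s - z_t` for `z_s`, for all `s ∈ S`. -/
def shiftT (S : Finset (Fin l)) (t : Fin l) (ht : t ∉ S) : RF k l →+* RF k l :=
  IsFractionRing.lift
    (g := (algebraMap (MvPolynomial (Fin l) k) (RF k l)).comp (shiftAuxP k l S t))
    (fun a b hab =>
      shiftAuxP_injective S t ht (IsFractionRing.injective _ _ hab))

/-- The operator `ℰ = Σ_{s ∈ S} (-z_s⁻¹ ∂_{z_s} + 2 z_s⁻²)`. -/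
def curlyE {l : ℕ} (D : Fin l → Derivation k (RF k l) (RF k l)) (S : Finset (Fin l))
    (β : RF k l) : RF k l :=
  ∑ s ∈ S, (-((zv s)⁻¹ * D s β) + 2 * (zv s) ^ (-2 : ℤ) * β)

end Shift

end Griess

namespace Griess

section Helpers

open HahnSeries
open scoped LaurentSeries RatFunc

/-- coefficientwise operator `f_m ↦ e f_m + m c f_m`. -/
def lop {k L : Type} [Field k] [Field L] [Algebra k L] (e : Derivation k L L) (c : L)
    (f : LaurentSeries L) : LaurentSeries L where
  coeff m := e (f.coeff m) + (m : L) * c * f.coeff m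
  isPWO_support' := f.isPWO_support.mono (by
    intro m hm h0
    apply hm
    simp [h0])

variable {k L : Type} [Field k] [Field L] [Algebra k L]

lemma lop_coeff (e : Derivation k L L) (c : L) (f : LaurentSeries L) (m : ℤ) :
    (lop e c f).coeff m = e (f.coeff m) + (m : L) * c * f.coeff m := rfl

lemma lop_support (e : Derivation k L L) (c : L) (f : LaurentSeries L) :
    (lop e c f).support ⊆ f.support := by
  intro m hm h0
  apply hm
  simp [lop_coeff, h0]

lemma lop_add (e : Derivation k L L) (c : L) (f g : LaurentSeries L) :
    lop e c (f + g) = lop e c f + lop e c g := by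
  ext m
  simp only [lop_coeff, coeff_add, map_add]
  ring

lemma lop_mul (e : Derivation k L L) (c : L) (f g : LaurentSeries L) :
    lop e c (f * g) = f * lop e c g + g * lop e c f := by
  ext m
  rw [mul_comm g, coeff_add, lop_coeff,
    coeff_mul_left' f.isPWO_support (lop_support e c f),
    coeff_mul_right' g.isPWO_support (lop_support e c g), coeff_mul, map_sum, Finset.mul_sum,
    ← Finset.sum_add_distrib, ← Finset.sum_add_distrib]
  apply Finset.sum_congr rfl
  intro x hx
  have hx' : x.1 + x.2 = m := (Finset.mem_antidiagonal.1 hx).2.2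
  have : (m : L) = x.1 + x.2 := by rw [← hx']; push_cast; ring
  simp only [lop_coeff, Derivation.leibniz, smul_eq_mul, this]
  ring

lemma lop_single (e : Derivation k L L) (c : L) (n : ℤ) (a : L) :
    lop e c (single n a) = single n (e a + (n : L) * c * a) := by
  ext m
  rw [lop_coeff, coeff_single, coeff_single]
  split_ifs with h
  · rw [h]
  · simp

/-- The vector field `Σ zᵢ² ∂ᵢ` in the new coordinates. -/
def vf (e : Derivation k L L) (c : L) (f : LaurentSeries L) : LaurentSeries L :=
  lop e (2 * c) f + single 1 1 * lop (0 : Derivation k L L) 1 f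

lemma vf_add (e : Derivation k L L) (c : L) (f g : LaurentSeries L) :
    vf e c (f + g) = vf e c f + vf e c g := by
  simp only [vf, lop_add]; ring

lemma vf_mul (e : Derivation k L L) (c : L) (f g : LaurentSeries L) :
    vf e c (f * g) = f * vf e c g + g * vf e c f := by
  simp only [vf, lop_mul]; ring

/-- Laurent expansion as a ring homomorphism. -/
def coeL (L : Type) [Field L] : RatFunc L →+* LaurentSeries L :=
  algebraMap (RatFunc L) (LaurentSeries L)

lemma lcoeff_eq (m : ℤ) (f : RatFunc L) : lcoeff m f = (coeL L f).coeff m := rfl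

lemma coeL_C (a : L) : coeL L
    (algebraMap (Polynomial L) (RatFunc L) (Polynomial.C a)) = single 0 a := by
  rw [coeL, ← IsScalarTower.algebraMap_apply]
  simp

lemma coeL_X : coeL L
    (algebraMap (Polynomial L) (RatFunc L) Polynomial.X) = single 1 1 := by
  rw [RatFunc.algebraMap_X]
  exact RatFunc.coe_X (F := L)

variable {l : ℕ}

/-- The full expansion homomorphism. -/
def expa (k : Type) [Field k] {l : ℕ} (i j : Fin l) : RF k l →+* LaurentSeries (RF k l) :=
  (coeL (RF k l)).comp (subPair i j)

lemma rho_eq (i j : Fin l) (m : ℤ) (α : RF k l) : rho i j m α = (expa k i j α).coeff m :=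
  lcoeff_eq _ _

lemma expa_alg (i j : Fin l) (p : MvPolynomial (Fin l) k) :
    expa k i j (algebraMap _ _ p) =
      coeL (RF k l)
        (toRatFuncHom k l (subPairAux k l i j p)) := by
  rw [expa, RingHom.comp_apply]
  exact congrArg _ (IsFractionRing.lift_algebraMap
    (g := (toRatFuncHom k l).comp (subPairAux k l i j))
    (fun a b hab => subPairAux_injective i j (toRatFuncHom_injective hab)) p)

lemma expa_C (i j : Fin l) (a : k) :
    expa k i j (algebraMap (MvPolynomial (Fin l) k) (RF k l) (MvPolynomial.C a)) =
      single 0 (algebraMap (MvPolynomial (Fin l) k) (RF k l) (MvPolynomial.C a)) := by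
  rw [expa_alg, ← coeL_C]
  simp [toRatFuncHom, subPairAux, Polynomial.algebraMap_apply, MvPolynomial.algebraMap_eq]

lemma expa_of_ne (i j s : Fin l) (h : s ≠ i) :
    expa k i j (zv s) = single 0 (zv s) := by
  rw [zv, expa_alg, ← coeL_C]
  simp [toRatFuncHom, subPairAux, h]

lemma expa_self (i j : Fin l) :
    expa k i j (zv i) = single 1 1 + single 0 (zv j) := by
  rw [zv, expa_alg, zv, ← coeL_C]
  simp [toRatFuncHom, subPairAux, coeL_X, - RatFunc.algebraMap_X]

lemma D_C (d : Derivation k (RF k l) (RF k l)) (a : k) :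
    d (algebraMap (MvPolynomial (Fin l) k) (RF k l) (MvPolynomial.C a)) = 0 := by
  rw [← MvPolynomial.algebraMap_eq, ← IsScalarTower.algebraMap_apply]
  exact d.map_algebraMap a

lemma der_sum (S : Finset (Fin l)) (F : Fin l → Derivation k (RF k l) (RF k l)) (x : RF k l) :
    (∑ s ∈ S, F s) x = ∑ s ∈ S, F s x := by
  induction S using Finset.induction_on with
  | empty => simp
  | insert a S ha ih => rw [Finset.sum_insert ha, Finset.sum_insert ha, Derivation.add_apply, ih]

lemma expa_vf (i j : Fin l) (d e : Derivation k (RF k l) (RF k l)) (c : RF k l)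
    (h : ∀ s, expa k i j (d (zv s)) = vf e c (expa k i j (zv s))) (α : RF k l) :
    expa k i j (d α) = vf e c (expa k i j α) := by
  have hp : ∀ p : MvPolynomial (Fin l) k,
      expa k i j (d (algebraMap _ _ p)) = vf e c (expa k i j (algebraMap _ _ p)) := by
    intro p
    induction p using MvPolynomial.induction_on with
    | C a => simp [expa_C, D_C, vf, lop_single]
    | add p q hp hq => simp only [map_add, hp, hq, vf_add]
    | mul_X p s hp =>
      have hs := h s
      rw [zv] at hs
      simp only [map_mul, Derivation.leibniz, map_add, smul_eq_mul, vf_mul, hp, hs]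
  obtain ⟨p, q, hq, rfl⟩ := IsFractionRing.div_surjective (A := MvPolynomial (Fin l) k) α
  set P := algebraMap _ (RF k l) p with hP
  set Q := algebraMap _ (RF k l) q with hQ
  have hQ0 : Q ≠ 0 := by
    simpa [hQ] using nonZeroDivisors.ne_zero hq
  have e0 : P / Q * Q = P := div_mul_cancel₀ _ hQ0
  have e1 : expa k i j (d (P / Q * Q)) = vf e c (expa k i j (P / Q * Q)) := by
    rw [e0]; exact hp p
  rw [Derivation.leibniz, map_add, smul_eq_mul, smul_eq_mul, map_mul, map_mul, map_mul, vf_mul,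
    hp q] at e1
  have hne : expa k i j Q ≠ 0 := (map_ne_zero _).2 hQ0
  exact mul_left_cancel₀ hne (add_left_cancel e1)

end Helpers

/-- if `α ∈ Φ^l` is `(4,…,4)`-regular and `ord_{ij}α = -2`, then
`ρ^{(-2)}_{ij}α` is `(4,…,4)`-regular with respect to the `l-1` variables
`z₁,…,ẑᵢ,…,z_l`. -/
theorem statement11 {k : Type} [Field k] [CharZero k] {l : ℕ}
    (D : Fin l → Derivation k (RF k l) (RF k l)) (hD : IsPartialDeriv D)
    (α : RF k l) (hΦ : α ∈ Phi k l)
    (hreg : DeltaStar D (fun _ => 4) α = 0)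
    (i j : Fin l) (hij : i < j)
    (hord : rho i j (-2) α ≠ 0) (hmin : ∀ m : ℤ, m < -2 → rho i j m α = 0) :
    ∑ s ∈ ({i}ᶜ : Finset (Fin l)),
      ((zv s) ^ 2 * D s (rho i j (-2) α) + 4 * zv s * rho i j (-2) α) = 0 := by
  set e : Derivation k (RF k l) (RF k l) := ∑ s ∈ ({i}ᶜ : Finset (Fin l)), ((zv s : RF k l) ^ 2) • D s with he
  set d : Derivation k (RF k l) (RF k l) := ∑ s : Fin l, ((zv s : RF k l) ^ 2) • D s with hd
  have ev : ∀ x, e x = ∑ s ∈ ({i}ᶜ : Finset (Fin l)), (zv s) ^ 2 * D s x := by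
    intro x; simp [he, der_sum]
  have dv : ∀ x, d x = ∑ s : Fin l, (zv s) ^ 2 * D s x := by
    intro x; simp [hd, der_sum]
  have dz : ∀ s : Fin l, d (zv s) = zv s ^ 2 := by
    intro s; simp [dv, hD _ s]
  have ez : ∀ s : Fin l, s ≠ i → e (zv s) = zv s ^ 2 := by
    intro s hs; simp [ev, hD _ s, hs]
  have key := expa_vf i j d e (zv j) (by
    intro s
    rw [dz]
    by_cases hs : s = i
    · subst hs
      rw [map_pow, expa_self, vf_add]
      simp only [vf, lop_single, ez j hij.ne']
      ext m
      simp [pow_two, add_mul, mul_add, HahnSeries.coeff_single]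
      split_ifs <;> first | ring | omega
    · rw [map_pow, expa_of_ne i j s hs]
      simp [vf, lop_single, ez s hs, pow_two]) α
  have split : ∀ f : Fin l → RF k l, ∑ s, f s = f i + ∑ s ∈ ({i}ᶜ : Finset (Fin l)), f s := by
    intro f
    rw [Finset.compl_singleton, Finset.add_sum_erase _ _ (Finset.mem_univ i)]
  have h0 : d α + 4 * zv i * α + 4 * (∑ s ∈ ({i}ᶜ : Finset (Fin l)), (zv s : RF k l)) * α = 0 := by
    rw [← hreg, DeltaStar, Finset.sum_add_distrib, ← dv, add_assoc]
    congr 1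
    rw [split, Finset.mul_sum, Finset.sum_mul]
    push_cast
    rfl
  have h1 := congrArg (fun x => (expa k i j x).coeff (-2)) h0
  have hS : expa k i j (∑ s ∈ ({i}ᶜ : Finset (Fin l)), (zv s : RF k l))
      = HahnSeries.single 0 (∑ s ∈ ({i}ᶜ : Finset (Fin l)), (zv s : RF k l)) := by
    have hC : ∀ a : RF k l, HahnSeries.single (0 : ℤ) a = HahnSeries.C a := fun _ => rfl
    rw [map_sum, hC, map_sum]
    apply Finset.sum_congr rfl
    intro s hs
    exact expa_of_ne i j s (by simpa using hs)
  have h4 : expa k i j 4 = HahnSeries.single 0 4 := by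
    have hC : ∀ a : RF k l, HahnSeries.single (0 : ℤ) a = HahnSeries.C a := fun _ => rfl
    rw [hC, map_ofNat, map_ofNat]
  have hm3 := hmin (-3) (by norm_num)
  rw [rho_eq] at hm3
  simp only [map_add, map_mul, key, hS, expa_self, h4, map_zero, vf, mul_assoc, add_mul,
    HahnSeries.coeff_add, HahnSeries.coeff_single_mul, lop_coeff, HahnSeries.coeff_zero] at h1
  norm_num [hm3] at h1
  rw [Finset.sum_add_distrib, ← ev, ← Finset.sum_mul, ← Finset.mul_sum, rho_eq]
  linear_combination h1

end Griess
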